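/- arXiv:1606.08034 — 2 statements merged into one kernel-verified Lean document; each statement's English description precedes it below -/
import Mathlib

section
/- Let G be a group, J an abelian group with an action of G by group automorphisms, A and B two G-stable subgroups of J, and n ≥ 1 an integer. Assume that (i) B is n-divisible; (ii) the n-torsion subgroup B[n] is contained in A ∩ B and A ∩ B is finite; (iii) (B^G)[n] = 0; and (iv) ((J/B)^G)[n] = 0. Then there is a well-defined group homomorphism φ : B^G / n·B^G → ker(H^1(G, A) → H^1(G, J)) sending the class of x ∈ B^G to the cohomology class of the 1-cocycle σ ↦ σ·y − y, where y ∈ B is any element with n·y = x. Moreover, the kernel of φ is isomorphic to a subgroup of J^G/(A^G + B^G); in particular, φ is injective whenever J^G = A^G + B^G. -/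
section VisibilityFramework

variable (G : Type) [Group G] (J : Type) [AddCommGroup J] [DistribMulAction G J]

/-- The 1-cocycles of `G` with values in the subgroup `A` of `J`. -/
def oneCocycles (A : AddSubgroup J) : AddSubgroup (G → J) where
  carrier := {f | (∀ σ, f σ ∈ A) ∧ ∀ σ τ, f (σ * τ) = f σ + σ • f τ}
  zero_mem' := ⟨fun _ => A.zero_mem, by simp⟩
  add_mem' := by
    rintro f g ⟨hfA, hf⟩ ⟨hgA, hg⟩
    refine ⟨fun σ => A.add_mem (hfA σ) (hgA σ), fun σ τ => ?_⟩
    simp only [Pi.add_apply, hf σ τ, hg σ τ, smul_add]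
    abel
  neg_mem' := by
    rintro f ⟨hfA, hf⟩
    refine ⟨fun σ => A.neg_mem (hfA σ), fun σ τ => ?_⟩
    simp only [Pi.neg_apply, hf σ τ, smul_neg]
    abel

/-- The 1-coboundaries of `G` with values in the subgroup `A` of `J`:
maps of the form `σ ↦ σ • a - a` for some `a ∈ A`. -/
def oneCoboundaries (A : AddSubgroup J) : AddSubgroup (G → J) where
  carrier := {f | ∃ a ∈ A, ∀ σ, f σ = σ • a - a}
  zero_mem' := ⟨0, A.zero_mem, by simp⟩
  add_mem' := by
    rintro f g ⟨a, ha, hf⟩ ⟨b, hb, hg⟩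
    refine ⟨a + b, A.add_mem ha hb, fun σ => ?_⟩
    simp only [Pi.add_apply, hf σ, hg σ, smul_add]
    abel
  neg_mem' := by
    rintro f ⟨a, ha, hf⟩
    refine ⟨-a, A.neg_mem ha, fun σ => ?_⟩
    simp only [Pi.neg_apply, hf σ, smul_neg]
    abel

/-- The first group cohomology `H¹(G, A)` of `G` with coefficients in the `G`-stable
subgroup `A` of `J`, defined as 1-cocycles modulo 1-coboundaries. -/
def H1 (A : AddSubgroup J) : Type :=
  (oneCocycles G J A) ⧸ ((oneCoboundaries G J A).addSubgroupOf (oneCocycles G J A))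

noncomputable instance (A : AddSubgroup J) : AddCommGroup (H1 G J A) :=
  QuotientAddGroup.Quotient.addCommGroup _

/-- The class in `H¹(G, A)` of a 1-cocycle. -/
def H1π (A : AddSubgroup J) (f : oneCocycles G J A) : H1 G J A :=
  QuotientAddGroup.mk f

/-- The map on 1-cocycles induced by an inclusion `A ≤ A'` of subgroups of `J`. -/
def oneCocyclesMap {A A' : AddSubgroup J} (h : A ≤ A') :
    oneCocycles G J A →+ oneCocycles G J A' where
  toFun f := ⟨(f : G → J), ⟨fun σ => h (f.2.1 σ), f.2.2⟩⟩
  map_zero' := rfl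
  map_add' _ _ := rfl

/-- The map `H¹(G, A) → H¹(G, A')` induced by an inclusion `A ≤ A'`. -/
noncomputable def H1map {A A' : AddSubgroup J} (h : A ≤ A') : H1 G J A →+ H1 G J A' :=
  QuotientAddGroup.map _ _ (oneCocyclesMap G J h)
    (by
      rintro ⟨f, hf⟩ hmem
      obtain ⟨a, ha, hfa⟩ := hmem
      exact ⟨a, h ha, hfa⟩)

/-- The subgroup of `G`-fixed points of `J`. -/
def fixedAddSubgroup : AddSubgroup J where
  carrier := {x | ∀ g : G, g • x = x}
  zero_mem' := fun g => smul_zero g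
  add_mem' := by
    intro x y hx hy g
    rw [smul_add, hx g, hy g]
  neg_mem' := by
    intro x hx g
    rw [smul_neg, hx g]

/-- The subgroup of `n`-th multiples of a group. -/
def nMultiples (n : ℕ) (M : Type) [AddCommGroup M] : AddSubgroup M :=
  AddMonoidHom.range
    { toFun := fun x : M => n • x
      map_zero' := smul_zero n
      map_add' := fun x y => smul_add n x y }

end VisibilityFramework

/-!
A point `y ∈ B` with `n • y` fixed has `σ • y - y ∈ B[n] ⊆ A`, so it is fixed modulo `A`, and
`φ (n • y)` is its image under the connecting homomorphism `δ` of `0 → A → J → J/A → 0`. The kernel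
of `δ` is `A + J^G`. On the other hand `n • y ↦ y` is a well-defined homomorphism
`θ : B^G/n·B^G → J/(A + B^G)`, which is injective as soon as `(A ∩ B)^G ⊆ n·B^G`; this holds when
`A ∩ B` is finite and `(B^G)[n] = 0`, since multiplication by `n` is then an injective endomorphism
of the finite group `(A ∩ B)^G`. By the modular law `J^G/(A^G + B^G)` is the subgroup
`(A + J^G)/(A + B^G)` of `J/(A + B^G)`, and `ker φ` is its preimage under `θ`.
-/

section SubgroupQuotients

variable {M : Type*} [AddCommGroup M] (A B F : AddSubgroup M)

theorem sup_inf_addSubgroupOf :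
    (A ⊔ B ⊓ F).addSubgroupOf F = A.addSubgroupOf F ⊔ B.addSubgroupOf F := by
  rw [← AddSubgroup.inf_addSubgroupOf_right, sup_comm, sup_inf_assoc_of_le _ inf_le_right,
    AddSubgroup.addSubgroupOf_sup inf_le_right inf_le_right, AddSubgroup.inf_addSubgroupOf_right,
    AddSubgroup.inf_addSubgroupOf_right, sup_comm]

/-- The map `F/(A ∩ F + B ∩ F) → M/(A + B ∩ F)` induced by the inclusion of `F` in `M`. For
`F = J^G` its source is the group `J^G/(A^G + B^G)` that receives `ker φ`. -/
def quotientSupInclusion : F ⧸ (A.addSubgroupOf F ⊔ B.addSubgroupOf F) →+ M ⧸ (A ⊔ B ⊓ F) :=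
  QuotientAddGroup.map _ _ F.subtype (sup_inf_addSubgroupOf A B F).ge

theorem quotientSupInclusion_injective : Function.Injective (quotientSupInclusion A B F) := by
  refine (injective_iff_map_eq_zero _).2 fun q hq => ?_
  obtain ⟨x, rfl⟩ := QuotientAddGroup.mk_surjective q
  have hx : x ∈ (A ⊔ B ⊓ F).addSubgroupOf F := (QuotientAddGroup.eq_zero_iff (x : M)).1 hq
  exact (QuotientAddGroup.eq_zero_iff x).2 (sup_inf_addSubgroupOf A B F ▸ hx)

theorem comap_mk'_range_quotientSupInclusion :
    (quotientSupInclusion A B F).range.comap (QuotientAddGroup.mk' (A ⊔ B ⊓ F)) = A ⊔ F := by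
  have hrange : (quotientSupInclusion A B F).range = F.map (QuotientAddGroup.mk' _) :=
    calc (quotientSupInclusion A B F).range
        = ((quotientSupInclusion A B F).comp (QuotientAddGroup.mk' _)).range := by
          rw [AddMonoidHom.range_comp, QuotientAddGroup.range_mk', AddMonoidHom.range_eq_map]
      _ = ((QuotientAddGroup.mk' _).comp F.subtype).range := rfl
      _ = F.map (QuotientAddGroup.mk' _) := by rw [AddMonoidHom.range_comp, F.range_subtype]
  have hsup : B ⊓ F ⊔ F = F := sup_eq_right.2 inf_le_right
  rw [hrange, QuotientAddGroup.comap_map_mk', sup_assoc, hsup]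

end SubgroupQuotients

theorem exists_injective_of_range_le_range {K M N : Type*} [AddGroup K] [AddGroup M] [AddGroup N]
    {f : K →+ N} {i : M →+ N} (hf : Function.Injective f) (hi : Function.Injective i)
    (h : f.range ≤ i.range) : ∃ g : K →+ M, Function.Injective g :=
  ⟨(AddMonoidHom.ofInjective hi).symm.toAddMonoidHom.comp
      (f.codRestrict i.range fun k => h ⟨k, rfl⟩),
    (AddMonoidHom.ofInjective hi).symm.injective.comp fun _ _ hk => hf (congrArg Subtype.val hk)⟩

theorem injective_of_injective_ker_of_subsingleton {M N P : Type*} [AddGroup M] [AddGroup N]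
    [Subsingleton P] {f : M →+ N} {g : f.ker → P} (hg : Function.Injective g) :
    Function.Injective f :=
  have := hg.subsingleton
  f.ker_eq_bot_iff.1 (AddSubgroup.eq_bot_of_subsingleton _)

section ConnectingHom

variable (G : Type) [Group G] {J : Type} [AddCommGroup J] [DistribMulAction G J]
  (A : AddSubgroup J)

/-- The differential `y ↦ (σ ↦ σ • y - y)` from 0-cochains to 1-cochains. -/
def coboundaryHom : J →+ (G → J) where
  toFun y σ := σ • y - y
  map_zero' := by ext; simp
  map_add' x y := by ext; simp only [smul_add, Pi.add_apply]; abel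

/-- The preimage in `J` of `(J/A)^G`, encoded as the elements whose coboundary takes values
in `A`. -/
def fixedModulo : AddSubgroup J :=
  (oneCocycles G J A).comap (coboundaryHom G)

variable {G A} in
theorem mem_fixedModulo_iff {y : J} : y ∈ fixedModulo G A ↔ ∀ σ : G, σ • y - y ∈ A := by
  refine and_iff_left fun σ τ => ?_
  change (σ * τ) • y - y = σ • y - y + σ • (τ • y - y)
  rw [mul_smul, smul_sub]
  abel

variable {G A} in
theorem H1π_eq_zero_iff (f : oneCocycles G J A) :
    H1π G J A f = 0 ↔ ∃ a ∈ A, ∀ σ, (f : G → J) σ = σ • a - a :=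
  QuotientAddGroup.eq_zero_iff f

/-- The connecting homomorphism `(J/A)^G → H¹(G, A)` of `0 → A → J → J/A → 0`, precomposed with
`fixedModulo G A → (J/A)^G` and with values in the kernel of `H¹(G, A) → H¹(G, J)`. -/
noncomputable def connectingHom : fixedModulo G A →+ (H1map G J (le_top : A ≤ ⊤)).ker :=
  ((AddMonoidHom.mk' (H1π G J A) fun _ _ => rfl).comp
    ((coboundaryHom G).addSubgroupComap (oneCocycles G J A))).codRestrict _ fun y =>
      (H1π_eq_zero_iff (A := (⊤ : AddSubgroup J)) _).2 ⟨y, AddSubgroup.mem_top _, fun _ => rfl⟩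

theorem ker_connectingHom :
    (connectingHom G A).ker = (A ⊔ fixedAddSubgroup G J).addSubgroupOf (fixedModulo G A) := by
  ext y
  have hfixed (a : J) : (∀ σ : G, σ • (y : J) - y = σ • a - a) ↔
      (y : J) - a ∈ fixedAddSubgroup G J :=
    forall_congr' fun σ => by rw [smul_sub, sub_eq_sub_iff_sub_eq_sub]
  rw [AddMonoidHom.mem_ker, Subtype.ext_iff, AddSubgroup.mem_addSubgroupOf, AddSubgroup.mem_sup]
  refine (H1π_eq_zero_iff _).trans (exists_congr fun a => and_congr_right fun _ =>
    (hfixed a).trans ⟨fun h => ⟨y - a, h, add_sub_cancel a _⟩, ?_⟩)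
  rintro ⟨z, hz, hazy⟩
  rwa [← hazy, add_sub_cancel_left]

end ConnectingHom

section DivisionPoints

variable (G : Type) [Group G] {J : Type} [AddCommGroup J] [DistribMulAction G J]

/-- The elements `y` of `B` such that `n • y` is fixed by `G`. -/
def fixedDivisionPoints (B : AddSubgroup J) (n : ℕ) : AddSubgroup J :=
  B ⊓ (fixedAddSubgroup G J).comap (nsmulAddMonoidHom n)

/-- The map `y ↦ n • y` from the division points of `B^G` to `B^G/n·B^G`. Homomorphisms out of
`B^G/n·B^G` are obtained by descending along it. -/
def nsmulClass (B : AddSubgroup J) (n : ℕ) : fixedDivisionPoints G B n →+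
    ↥(B ⊓ fixedAddSubgroup G J) ⧸ nMultiples n ↥(B ⊓ fixedAddSubgroup G J) :=
  (QuotientAddGroup.mk' _).comp
    (((nsmulAddMonoidHom n).comp (fixedDivisionPoints G B n).subtype).codRestrict _
      fun y => ⟨B.nsmul_mem y.2.1 n, y.2.2⟩)

variable {G} {A B : AddSubgroup J} {n : ℕ}

theorem mem_ker_nsmulClass_iff {y : fixedDivisionPoints G B n} :
    y ∈ (nsmulClass G B n).ker ↔ ∃ b ∈ B ⊓ fixedAddSubgroup G J, n • b = n • (y : J) := by
  refine (QuotientAddGroup.eq_zero_iff _).trans ⟨?_, ?_⟩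
  · rintro ⟨b, hb⟩
    exact ⟨b, b.2, congrArg Subtype.val hb⟩
  · rintro ⟨b, hb, h⟩
    exact ⟨⟨b, hb⟩, Subtype.ext h⟩

theorem exists_nsmulClass_eq_mk {x : ↥(B ⊓ fixedAddSubgroup G J)} {y : J} (hy : y ∈ B)
    (hyx : n • y = x) :
    ∃ hy' : y ∈ fixedDivisionPoints G B n, nsmulClass G B n ⟨y, hy'⟩ = QuotientAddGroup.mk x := by
  have hny : n • y ∈ fixedAddSubgroup G J := hyx ▸ x.2.2
  exact ⟨⟨hy, hny⟩, congrArg QuotientAddGroup.mk (Subtype.ext hyx)⟩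

theorem nsmulClass_surjective (hdiv : ∀ b ∈ B, ∃ c ∈ B, n • c = b) :
    Function.Surjective (nsmulClass G B n) := by
  intro q
  obtain ⟨x, rfl⟩ := QuotientAddGroup.mk_surjective q
  obtain ⟨y, hy, hyx⟩ := hdiv x x.2.1
  obtain ⟨hy', h⟩ := exists_nsmulClass_eq_mk hy hyx
  exact ⟨⟨y, hy'⟩, h⟩

theorem fixedDivisionPoints_le_fixedModulo (hBstable : ∀ g : G, ∀ b ∈ B, g • b ∈ B)
    (htors : ∀ b ∈ B, n • b = 0 → b ∈ A) : fixedDivisionPoints G B n ≤ fixedModulo G A := by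
  rintro y ⟨hyB, hny⟩
  refine mem_fixedModulo_iff.2 fun σ => htors _ (B.sub_mem (hBstable σ y hyB) hyB) ?_
  have hσ : σ • n • y = n • y := hny σ
  rw [smul_sub, ← smul_comm σ n y, hσ, sub_self]

theorem ker_nsmulClass_le (htors : ∀ b ∈ B, n • b = 0 → b ∈ A) :
    (nsmulClass G B n).ker ≤
      (A ⊔ B ⊓ fixedAddSubgroup G J).addSubgroupOf (fixedDivisionPoints G B n) := by
  intro y hy
  obtain ⟨b, hb, hbn⟩ := mem_ker_nsmulClass_iff.1 hy
  have hyb : (y : J) - b ∈ A :=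
    htors _ (B.sub_mem y.2.1 hb.1) (by rw [smul_sub, hbn, sub_self])
  exact AddSubgroup.mem_sup.2 ⟨y - b, hyb, b, hb, sub_add_cancel _ _⟩

theorem le_ker_nsmulClass
    (hABG : ∀ c ∈ A ⊓ B ⊓ fixedAddSubgroup G J, ∃ b ∈ B ⊓ fixedAddSubgroup G J, n • b = c) :
    (A ⊔ B ⊓ fixedAddSubgroup G J).addSubgroupOf (fixedDivisionPoints G B n) ≤
      (nsmulClass G B n).ker := by
  intro y hy
  obtain ⟨a, ha, b, hb, hab⟩ := AddSubgroup.mem_sup.1 hy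
  have haB : a ∈ B := eq_sub_of_add_eq hab ▸ B.sub_mem y.2.1 hb.1
  have hna : n • a ∈ fixedAddSubgroup G J := by
    rw [eq_sub_of_add_eq hab, smul_sub]
    exact AddSubgroup.sub_mem _ y.2.2 (AddSubgroup.nsmul_mem _ hb.2 n)
  obtain ⟨c, hc, hca⟩ := hABG (n • a) ⟨(A ⊓ B).nsmul_mem ⟨ha, haB⟩ n, hna⟩
  have hcb : n • (c + b) = n • (y : J) := by
    rw [smul_add, hca, ← smul_add, hab, AddSubgroup.subtype_apply]
  exact mem_ker_nsmulClass_iff.2 ⟨c + b, add_mem hc hb, hcb⟩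

theorem exists_fixed_nsmul_eq_of_finite [Finite ↥(A ⊓ B)]
    (hBG : ∀ b ∈ B, (∀ σ : G, σ • b = b) → n • b = 0 → b = 0) :
    ∀ c ∈ A ⊓ B ⊓ fixedAddSubgroup G J, ∃ b ∈ B ⊓ fixedAddSubgroup G J, n • b = c := by
  intro c hc
  have : Finite ↥(A ⊓ B ⊓ fixedAddSubgroup G J) :=
    Finite.of_injective _ (AddSubgroup.inclusion_injective (inf_le_left : _ ≤ A ⊓ B))
  have hinj : Function.Injective
      (nsmulAddMonoidHom n : ↥(A ⊓ B ⊓ fixedAddSubgroup G J) →+ _) :=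
    (injective_iff_map_eq_zero _).2 fun m hm =>
      Subtype.ext (hBG m m.2.1.2 m.2.2 (congrArg Subtype.val hm))
  obtain ⟨b, hb⟩ := Finite.surjective_of_injective hinj ⟨c, hc⟩
  exact ⟨b, ⟨b.2.1.2, b.2.2⟩, congrArg Subtype.val hb⟩

end DivisionPoints

section VisibilityHom

variable {G : Type} [Group G] {J : Type} [AddCommGroup J] [DistribMulAction G J]
  {A B : AddSubgroup J} {n : ℕ} (hBstable : ∀ g : G, ∀ b ∈ B, g • b ∈ B)
  (hdiv : ∀ b ∈ B, ∃ c ∈ B, n • c = b) (htors : ∀ b ∈ B, n • b = 0 → b ∈ A)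

/-- The visibility homomorphism `φ`, sending the class of `n • y` to that of the cocycle
`σ ↦ σ • y - y`. -/
noncomputable def visibilityHom :
    ↥(B ⊓ fixedAddSubgroup G J) ⧸ nMultiples n ↥(B ⊓ fixedAddSubgroup G J) →+
      (H1map G J (le_top : A ≤ ⊤)).ker :=
  (nsmulClass G B n).liftOfSurjective (nsmulClass_surjective hdiv)
    ⟨(connectingHom G A).comp
        (AddSubgroup.inclusion (fixedDivisionPoints_le_fixedModulo hBstable htors)), by
      rw [← AddMonoidHom.comap_ker, ker_connectingHom]
      exact (ker_nsmulClass_le htors).trans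
        (AddSubgroup.comap_mono (sup_le_sup_left inf_le_right A))⟩

theorem visibilityHom_nsmulClass (y : fixedDivisionPoints G B n) :
    visibilityHom hBstable hdiv htors (nsmulClass G B n y) =
      connectingHom G A ⟨y, fixedDivisionPoints_le_fixedModulo hBstable htors y.2⟩ :=
  AddMonoidHom.liftOfRightInverse_comp_apply _ _ _ _ _

variable (G) in
/-- The homomorphism `θ : B^G/n·B^G → J/(A + B^G)` sending the class of `n • y` to that of `y`.
The kernel of `visibilityHom` is read off from it. -/
noncomputable def divisionHom :
    ↥(B ⊓ fixedAddSubgroup G J) ⧸ nMultiples n ↥(B ⊓ fixedAddSubgroup G J) →+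
      J ⧸ (A ⊔ B ⊓ fixedAddSubgroup G J) :=
  (nsmulClass G B n).liftOfSurjective (nsmulClass_surjective hdiv)
    ⟨(QuotientAddGroup.mk' _).comp (fixedDivisionPoints G B n).subtype, by
      rw [← AddMonoidHom.comap_ker, QuotientAddGroup.ker_mk']
      exact ker_nsmulClass_le htors⟩

theorem divisionHom_nsmulClass (y : fixedDivisionPoints G B n) :
    divisionHom G hdiv htors (nsmulClass G B n y) = QuotientAddGroup.mk (y : J) :=
  AddMonoidHom.liftOfRightInverse_comp_apply _ _ _ _ _

theorem divisionHom_injective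
    (hABG : ∀ c ∈ A ⊓ B ⊓ fixedAddSubgroup G J, ∃ b ∈ B ⊓ fixedAddSubgroup G J, n • b = c) :
    Function.Injective (divisionHom G hdiv htors) := by
  refine (injective_iff_map_eq_zero _).2 fun q hq => ?_
  obtain ⟨y, rfl⟩ := nsmulClass_surjective hdiv q
  rw [divisionHom_nsmulClass, QuotientAddGroup.eq_zero_iff] at hq
  exact le_ker_nsmulClass hABG hq

theorem ker_visibilityHom :
    (visibilityHom hBstable hdiv htors).ker =
      (quotientSupInclusion A B (fixedAddSubgroup G J)).range.comap
        (divisionHom G hdiv htors) := by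
  ext q
  obtain ⟨y, rfl⟩ := nsmulClass_surjective hdiv q
  rw [AddMonoidHom.mem_ker, visibilityHom_nsmulClass, ← AddMonoidHom.mem_ker, ker_connectingHom,
    AddSubgroup.mem_comap, divisionHom_nsmulClass, AddSubgroup.mem_addSubgroupOf,
    ← comap_mk'_range_quotientSupInclusion A B]
  rfl

end VisibilityHom

theorem visibility_hom_exists_general
    (G : Type) [Group G] (J : Type) [AddCommGroup J] [DistribMulAction G J]
    (A B : AddSubgroup J)
    (_hAstable : ∀ (g : G), ∀ a ∈ A, g • a ∈ A)
    (hBstable : ∀ (g : G), ∀ b ∈ B, g • b ∈ B)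
    (n : ℕ)
    (hdiv : ∀ b ∈ B, ∃ c ∈ B, n • c = b)
    (htors : ∀ b ∈ B, n • b = 0 → b ∈ A)
    (hABG : ∀ c ∈ A ⊓ B ⊓ fixedAddSubgroup G J, ∃ b ∈ B ⊓ fixedAddSubgroup G J, n • b = c) :
    ∃ φ : (↥(B ⊓ fixedAddSubgroup G J) ⧸ nMultiples n ↥(B ⊓ fixedAddSubgroup G J)) →+
        ↥(AddMonoidHom.ker (H1map G J (le_top : A ≤ ⊤))),
      (∀ (x : ↥(B ⊓ fixedAddSubgroup G J)) (y : J), y ∈ B → n • y = (x : J) →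
        ∀ hz : (fun σ : G => σ • y - y) ∈ oneCocycles G J A,
          ((φ (QuotientAddGroup.mk x) : ↥(AddMonoidHom.ker (H1map G J (le_top : A ≤ ⊤)))) :
              H1 G J A) =
            H1π G J A ⟨fun σ : G => σ • y - y, hz⟩) ∧
      (∃ ψ : ↥(AddMonoidHom.ker φ) →+
          (↥(fixedAddSubgroup G J) ⧸
            (A.addSubgroupOf (fixedAddSubgroup G J) ⊔ B.addSubgroupOf (fixedAddSubgroup G J))),
        Function.Injective ψ) ∧
      ((A.addSubgroupOf (fixedAddSubgroup G J) ⊔ B.addSubgroupOf (fixedAddSubgroup G J) = ⊤) →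
        Function.Injective φ) := by
  have hψ := exists_injective_of_range_le_range
    (f := (divisionHom G hdiv htors).comp (visibilityHom hBstable hdiv htors).ker.subtype)
    ((divisionHom_injective hdiv htors hABG).comp Subtype.val_injective)
    (quotientSupInclusion_injective A B (fixedAddSubgroup G J)) (by
      rintro _ ⟨q, rfl⟩
      exact (ker_visibilityHom hBstable hdiv htors).le q.2)
  refine ⟨visibilityHom hBstable hdiv htors, fun x y hy hyx hz => ?_, hψ, fun htop => ?_⟩
  · obtain ⟨hy', hx⟩ := exists_nsmulClass_eq_mk hy hyx
    rw [← hx, visibilityHom_nsmulClass]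
    rfl
  · obtain ⟨ψ, hψ⟩ := hψ
    have := QuotientAddGroup.subsingleton_quotient_top (G := fixedAddSubgroup G J)
    rw [← htop] at this
    exact injective_of_injective_ker_of_subsingleton hψ

/-- **Visibility homomorphism.** Let `G` be a group, `J` an abelian group with an action of
`G` by group automorphisms, `A` and `B` two `G`-stable subgroups of `J` and `n ≥ 1`.
Assume that `B` is `n`-divisible, that `B[n] ⊆ A ∩ B` with `A ∩ B` finite, that
`(B^G)[n] = 0` and that `((J/B)^G)[n] = 0`.  Then there is a group homomorphism
`φ : B^G/n·B^G → ker (H¹(G,A) → H¹(G,J))` sending the class of `x` to the class of the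
cocycle `σ ↦ σ • y - y` where `n • y = x`, `y ∈ B`.  Moreover `ker φ` embeds into
`J^G/(A^G + B^G)`; in particular `φ` is injective whenever `J^G = A^G + B^G`. -/
theorem visibility_hom_exists
    (G : Type) [Group G] (J : Type) [AddCommGroup J] [DistribMulAction G J]
    (A B : AddSubgroup J)
    (hAstable : ∀ (g : G), ∀ a ∈ A, g • a ∈ A)
    (hBstable : ∀ (g : G), ∀ b ∈ B, g • b ∈ B)
    (n : ℕ) (hn : 1 ≤ n)
    -- (i) `B` is `n`-divisible
    (hdiv : ∀ b ∈ B, ∃ c ∈ B, n • c = b)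
    -- (ii) `B[n] ⊆ A ∩ B` and `A ∩ B` is finite
    (htors : ∀ b ∈ B, n • b = 0 → b ∈ A ⊓ B)
    (hfin : Finite ↥(A ⊓ B))
    -- (iii) `(B^G)[n] = 0`
    (hBG : ∀ b ∈ B, (∀ σ : G, σ • b = b) → n • b = 0 → b = 0)
    -- (iv) `((J/B)^G)[n] = 0`
    (hJB : ∀ x : J, (∀ σ : G, σ • x - x ∈ B) → n • x ∈ B → x ∈ B) :
    ∃ φ : (↥(B ⊓ fixedAddSubgroup G J) ⧸ nMultiples n ↥(B ⊓ fixedAddSubgroup G J)) →+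
        ↥(AddMonoidHom.ker (H1map G J (le_top : A ≤ ⊤))),
      -- `φ` sends the class of `x ∈ B^G` to the class of the cocycle `σ ↦ σ • y - y`,
      -- where `y ∈ B` is any element with `n • y = x`
      (∀ (x : ↥(B ⊓ fixedAddSubgroup G J)) (y : J), y ∈ B → n • y = (x : J) →
        ∀ hz : (fun σ : G => σ • y - y) ∈ oneCocycles G J A,
          ((φ (QuotientAddGroup.mk x) : ↥(AddMonoidHom.ker (H1map G J (le_top : A ≤ ⊤)))) :
              H1 G J A) =
            H1π G J A ⟨fun σ : G => σ • y - y, hz⟩) ∧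
      -- the kernel of `φ` is isomorphic to a subgroup of `J^G/(A^G + B^G)`
      (∃ ψ : ↥(AddMonoidHom.ker φ) →+
          (↥(fixedAddSubgroup G J) ⧸
            (A.addSubgroupOf (fixedAddSubgroup G J) ⊔ B.addSubgroupOf (fixedAddSubgroup G J))),
        Function.Injective ψ) ∧
      -- in particular, `φ` is injective whenever `J^G = A^G + B^G`
      ((A.addSubgroupOf (fixedAddSubgroup G J) ⊔ B.addSubgroupOf (fixedAddSubgroup G J) = ⊤) →
        Function.Injective φ) := by
  exact visibility_hom_exists_general G J A B hAstable hBstable n hdiv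
    (fun b hb h => (htors b hb h).1) (exists_fixed_nsmul_eq_of_finite hBG)
end

section
/- Let p be a prime and G a cyclic group of order p. Let M be a G-module whose underlying abelian group is a free ℤ_p-module of finite rank r, with G acting by ℤ_p-linear automorphisms, and let s denote the ℤ_p-rank of the fixed-point module M^G. Then H^1(G, M) is a finite elementary abelian p-group whose dimension as an 𝔽_p-vector space is at most (r − s)/(p − 1). -/
open scoped TensorProduct

section RepH1

variable {k : Type} [CommRing k] {G : Type} [Group G] {V : Type} [AddCommGroup V] [Module k V]

/-- The 1-cocycles of `G` with coefficients in the representation `ρ`. -/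
def repOneCocycles (ρ : Representation k G V) : Submodule k (G → V) where
  carrier := {f | ∀ σ τ, f (σ * τ) = f σ + ρ σ (f τ)}
  zero_mem' := by simp
  add_mem' := by
    intro f g hf hg σ τ
    simp only [Pi.add_apply, hf σ τ, hg σ τ, map_add]
    abel
  smul_mem' := by
    intro r f hf σ τ
    simp only [Pi.smul_apply, hf σ τ, map_smul, smul_add]

/-- The 1-coboundaries of `G` with coefficients in the representation `ρ`. -/
def repOneCoboundaries (ρ : Representation k G V) : Submodule k (G → V) where
  carrier := {f | ∃ v, ∀ σ, f σ = ρ σ v - v}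
  zero_mem' := ⟨0, by simp⟩
  add_mem' := by
    rintro f g ⟨v, hv⟩ ⟨w, hw⟩
    refine ⟨v + w, fun σ => ?_⟩
    simp only [Pi.add_apply, hv σ, hw σ, map_add]
    abel
  smul_mem' := by
    rintro r f ⟨v, hv⟩
    refine ⟨r • v, fun σ => ?_⟩
    simp only [Pi.smul_apply, hv σ, map_smul, smul_sub]

/-- The first group cohomology `H¹(G, ρ)`, defined as 1-cocycles modulo 1-coboundaries. -/
def repH1 (ρ : Representation k G V) : Type :=
  ↥(repOneCocycles ρ) ⧸
    (Submodule.comap (repOneCocycles ρ).subtype (repOneCoboundaries ρ))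

noncomputable instance (ρ : Representation k G V) : AddCommGroup (repH1 ρ) :=
  Submodule.Quotient.addCommGroup _

end RepH1

/-!
Let `g` generate `G` and let `K` be the kernel of the norm `N = 1 + g + ⋯ + g ^ (p - 1)` on `M`.
A 1-cocycle takes values in `K` and is determined by its value at `g`; it is a coboundary as soon as
that value lies in `(g - 1) K`. Hence `|H¹(G, M)|` divides the index `[K : (g - 1) K]`. On `K` the
operator `g` is a root of the cyclotomic polynomial `Φ_p`, and `(ζ - 1) ^ (p - 1)` divides `p` in
`ℤ[ζ_p]`, so `[K : (g - 1) K] ^ (p - 1) = [K : (g - 1) ^ (p - 1) K]` divides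
`[K : p K] = p ^ rank K`. Finally `N` acts as `p` on `M^G`, so `K` meets `M^G` trivially and
`rank K ≤ r - s`. The group `H¹(G, M)` is killed by `p` because for a cocycle `f` the element
`-∑ τ, f τ` has coboundary `|G| • f`.
-/

section Cyclotomic

open Polynomial

theorem exists_cyclotomic_dvd_natCast_sub_mul_X_sub_one_pow {n : ℕ} (hn : 0 < n) :
    ∃ a : ℤ[X], cyclotomic n ℤ ∣ (n : ℤ[X]) - a * (X - 1) ^ (n - 1) := by
  have hζ := Complex.isPrimitiveRoot_exp n hn.ne'
  obtain ⟨z, hz, hnz⟩ := hζ.self_sub_one_pow_dvd_order (Nat.sub_one_lt hn.ne')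
  rw [Algebra.adjoin_singleton_eq_range_aeval] at hz
  obtain ⟨a, rfl⟩ := hz
  refine ⟨a, ?_⟩
  rw [cyclotomic_eq_minpoly hζ hn]
  refine minpoly.isIntegrallyClosed_dvd (hζ.isIntegral hn) ?_
  simpa [sub_eq_zero] using hnz

theorem exists_commute_sub_one_pow_mul_eq_natCast {A : Type*} [Ring A] {n : ℕ} (hn : 0 < n) {T : A}
    (hT : aeval T (cyclotomic n ℤ) = 0) :
    ∃ B : A, Commute (T - 1) B ∧ (T - 1) ^ (n - 1) * B = n := by
  obtain ⟨a, b, hab⟩ := exists_cyclotomic_dvd_natCast_sub_mul_X_sub_one_pow hn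
  have hcomm : Commute (T - 1) (aeval T a) := by
    have hX : aeval T (X - 1 : ℤ[X]) = T - 1 := by simp
    exact hX ▸ (Commute.all (X - 1) a).map (aeval T)
  refine ⟨aeval T a, hcomm, ?_⟩
  rw [(hcomm.pow_left _).eq, eq_comm, ← sub_eq_zero]
  simpa [hT] using congrArg (aeval T) hab

end Cyclotomic

section CardQuot

variable {R K : Type*} [Ring R] [AddCommGroup K] [Module R K]

theorem cardQuot_range_pow_of_injective {f : Module.End R K} (hf : Function.Injective f) (n : ℕ) :
    (LinearMap.range (f ^ n)).cardQuot = (LinearMap.range f).cardQuot ^ n := by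
  induction n with
  | zero => simp [Module.End.one_eq_id]
  | succ n ih =>
    have hmap : (LinearMap.range (f ^ (n + 1))).toAddSubgroup =
        (LinearMap.range (f ^ n)).toAddSubgroup.map f.toAddMonoidHom := by
      ext x
      simp [pow_succ']
    rw [Submodule.cardQuot, hmap, AddSubgroup.index_map_of_injective _ hf, pow_succ, ← ih]
    rfl

open Polynomial in
theorem cardQuot_range_sub_one_pow_dvd {n : ℕ} (hn : 1 < n) {T : Module.End R K}
    (hT : aeval T (cyclotomic n ℤ) = 0) (hinj : Function.Injective (n : Module.End R K)) :
    (LinearMap.range (T - 1 : Module.End R K)).cardQuot ^ (n - 1) ∣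
      (LinearMap.range (n : Module.End R K)).cardQuot := by
  obtain ⟨B, hcomm, hB⟩ := exists_commute_sub_one_pow_mul_eq_natCast (zero_lt_one.trans hn) hT
  have hT_inj : Function.Injective (T - 1 : Module.End R K) := by
    rw [← hB, (hcomm.pow_left _).eq, ← pow_sub_one_mul (Nat.sub_pos_of_lt hn).ne', ← mul_assoc,
      Module.End.coe_mul] at hinj
    exact hinj.of_comp
  rw [← cardQuot_range_pow_of_injective hT_inj]
  refine AddSubgroup.index_dvd_of_le ?_
  rw [← hB]
  exact LinearMap.range_comp_le_range B ((T - 1) ^ (n - 1))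

end CardQuot

section FreeModule

variable {R M : Type*} [CommRing R] [AddCommGroup M] [Module R M] [Module.Free R M]
  [Module.Finite R M]

theorem cardQuot_smul_top_eq_pow_finrank [Nontrivial R] (I : Ideal R) :
    (I • ⊤ : Submodule R M).cardQuot = I.cardQuot ^ Module.finrank R M := by
  let b : Module.Basis _ (R ⧸ I) ((R ⧸ I) ⊗[R] M) := (Module.finBasis R M).baseChange (R ⧸ I)
  rw [Submodule.cardQuot_apply, Submodule.cardQuot_apply,
    ← Nat.card_congr (TensorProduct.quotTensorEquivQuotSMul M I).toEquiv,
    Nat.card_congr b.equivFun.toEquiv, Nat.card_fun, Nat.card_fin]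

theorem cardQuot_range_natCast_eq_pow_finrank [Nontrivial R] (n : ℕ) :
    (LinearMap.range (n : Module.End R M)).cardQuot =
      (Ideal.span {(n : R)}).cardQuot ^ Module.finrank R M := by
  rw [← cardQuot_smul_top_eq_pow_finrank, Submodule.ideal_span_singleton_smul]
  congr 1
  ext x
  simp [Submodule.mem_smul_pointwise_iff_exists, Module.End.natCast_apply,
    Nat.cast_smul_eq_nsmul]

end FreeModule

theorem finrank_add_finrank_le_of_disjoint {R M : Type*} [CommRing R] [IsDomain R]
    [AddCommGroup M] [Module R M] [Module.Finite R M] {S T : Submodule R M} (h : Disjoint S T) :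
    Module.finrank R S + Module.finrank R T ≤ Module.finrank R M := by
  rw [← S.finrank_quotient_add_finrank, add_comm]
  gcongr
  refine LinearMap.finrank_le_finrank_of_injective (f := S.mkQ.domRestrict T) ?_
  rw [LinearMap.injective_domRestrict_iff, S.ker_mkQ]
  exact h.symm

section Norm

variable {k G V : Type*} [CommRing k] [Group G] [Fintype G] [AddCommGroup V] [Module k V]
  (ρ : Representation k G V)

theorem norm_apply_eq_sum (v : V) : ρ.norm v = ∑ g, ρ g v := by
  simp [Representation.norm, LinearMap.sum_apply]

variable {ρ} in
theorem norm_apply_of_mem_invariants {v : V} (hv : v ∈ ρ.invariants) :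
    ρ.norm v = (Fintype.card G : k) • v := by
  simp [norm_apply_eq_sum, (ρ.mem_invariants v).mp hv, Nat.cast_smul_eq_nsmul]

theorem norm_eq_sum_range_pow {g : G} (hg : ∀ x, x ∈ Subgroup.zpowers g) :
    ρ.norm = ∑ i ∈ Finset.range (Fintype.card G), ρ g ^ i := by
  classical
  have hord : orderOf g = Fintype.card G := by
    rw [orderOf_eq_card_of_forall_mem_zpowers hg, Nat.card_eq_fintype_card]
  rw [Representation.norm, ← IsCyclic.image_range_orderOf hg, Finset.sum_image, hord]
  · simp_rw [map_pow]
  · intro i hi j hj hij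
    exact pow_injOn_Iio_orderOf (by simpa using hi) (by simpa using hj) hij

theorem finrank_ker_norm_add_finrank_invariants_le [IsDomain k] [Module.IsTorsionFree k V]
    [Module.Finite k V] (hG : (Fintype.card G : k) ≠ 0) :
    Module.finrank k (LinearMap.ker ρ.norm) + Module.finrank k ρ.invariants ≤
      Module.finrank k V := by
  refine finrank_add_finrank_le_of_disjoint (Submodule.disjoint_def.mpr fun v hker hinv => ?_)
  rw [LinearMap.mem_ker, norm_apply_of_mem_invariants hinv] at hker
  exact (smul_eq_zero.mp hker).resolve_left hG

/-- The subrepresentation of `ρ` on the kernel of its norm. When `G` has prime order `p`, a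
generator acts on it as a root of the `p`-th cyclotomic polynomial. -/
def kerNormRepresentation : Representation k G (LinearMap.ker ρ.norm) :=
  ρ.subrepresentation (LinearMap.ker ρ.norm) fun g v hv => by simpa using hv

@[simp]
theorem coe_kerNormRepresentation_apply (g : G) (v : LinearMap.ker ρ.norm) :
    (kerNormRepresentation ρ g v : V) = ρ g v :=
  rfl

theorem norm_kerNormRepresentation : (kerNormRepresentation ρ).norm = 0 := by
  refine LinearMap.ext fun v => Subtype.ext ?_
  calc ((kerNormRepresentation ρ).norm v : V)
    _ = ρ.norm v := by
      simp only [norm_apply_eq_sum, Submodule.coe_sum, coe_kerNormRepresentation_apply]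
    _ = 0 := v.2

open Polynomial in
theorem aeval_cyclotomic_eq_zero_of_norm_eq_zero {p : ℕ} (hp : p.Prime) (hcard : Fintype.card G = p)
    {g : G} (hg : ∀ x, x ∈ Subgroup.zpowers g) (hρ : ρ.norm = 0) :
    aeval (ρ g) (cyclotomic p ℤ) = 0 := by
  have := Fact.mk hp
  rw [cyclotomic_prime, map_sum, ← hρ, norm_eq_sum_range_pow ρ hg, hcard]
  simp only [map_pow, aeval_X]

end Norm

section Cocycles

variable {k : Type} [CommRing k] {G : Type} [Group G] {V : Type} [AddCommGroup V] [Module k V]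
  {ρ : Representation k G V}

theorem repOneCoboundaries_le_repOneCocycles : repOneCoboundaries ρ ≤ repOneCocycles ρ := by
  rintro f ⟨v, hv⟩ σ τ
  simp [hv]

theorem eq_zero_of_mem_repOneCocycles_of_apply_generator {f : G → V} (hf : f ∈ repOneCocycles ρ)
    {g : G} (hg : ∀ x, x ∈ Subgroup.zpowers g) (hfg : f g = 0) : f = 0 := by
  have hmul : ∀ σ τ, f (σ * τ) = f σ + ρ σ (f τ) := hf
  have hone : f 1 = 0 := by simpa using hmul 1 1
  funext x
  have hx := hg x
  rw [Subgroup.zpowers_eq_closure] at hx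
  induction hx using Subgroup.closure_induction with
  | mem y hy => rwa [Set.mem_singleton_iff.mp hy]
  | one => exact hone
  | mul y z _ _ hy hz => simp_all
  | inv y _ hy => simpa [hy, hone] using (hmul y⁻¹ y).symm

theorem mem_repOneCoboundaries_of_apply_generator {f : G → V} (hf : f ∈ repOneCocycles ρ)
    {g : G} (hg : ∀ x, x ∈ Subgroup.zpowers g) {v : V} (hfg : f g = ρ g v - v) :
    f ∈ repOneCoboundaries ρ := by
  let δ : G → V := fun σ => ρ σ v - v
  have hδ : δ ∈ repOneCoboundaries ρ := ⟨v, fun _ => rfl⟩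
  have hsub : f - δ = 0 := eq_zero_of_mem_repOneCocycles_of_apply_generator
    (sub_mem hf (repOneCoboundaries_le_repOneCocycles hδ)) hg (sub_eq_zero.mpr hfg)
  rwa [sub_eq_zero.mp hsub]

theorem norm_apply_eq_zero_of_mem_repOneCocycles [Fintype G] {f : G → V}
    (hf : f ∈ repOneCocycles ρ) (g : G) : ρ.norm (f g) = 0 := by
  have hmul : ∀ σ, ρ σ (f g) = f (σ * g) - f σ := fun σ => by rw [hf σ g, add_sub_cancel_left]
  simp only [norm_apply_eq_sum, hmul, Finset.sum_sub_distrib]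
  rw [Fintype.sum_equiv (Equiv.mulRight g) (fun σ => f (σ * g)) f fun _ => rfl, sub_self]

theorem card_nsmul_mem_repOneCoboundaries [Fintype G] {f : G → V} (hf : f ∈ repOneCocycles ρ) :
    Fintype.card G • f ∈ repOneCoboundaries ρ := by
  refine ⟨-∑ τ, f τ, fun σ => ?_⟩
  have hsum : ∑ τ, f (σ * τ) = ∑ τ, f τ :=
    Fintype.sum_equiv (Equiv.mulLeft σ) (fun τ => f (σ * τ)) f fun _ => rfl
  have hmul : ∀ τ, f (σ * τ) = f σ + ρ σ (f τ) := hf σ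
  rw [map_neg, map_sum, Pi.smul_apply]
  simp only [hmul, Finset.sum_add_distrib, Finset.sum_const, Finset.card_univ] at hsum
  rw [← hsum]
  abel

theorem card_nsmul_repH1_eq_zero [Fintype G] (x : repH1 ρ) : Fintype.card G • x = 0 := by
  obtain ⟨f, rfl⟩ := Submodule.Quotient.mk_surjective _ x
  exact (Submodule.Quotient.mk_eq_zero _ (x := Fintype.card G • f)).mpr
    (card_nsmul_mem_repOneCoboundaries f.2)

variable (ρ) in
/-- Evaluation of 1-cocycles at `g`, with values in the kernel of the norm. If `g` generates `G`, it
embeds `H¹(G, ρ)` into the quotient of that kernel by `(ρ g - 1) V`. -/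
def evalOneCocycle [Fintype G] (g : G) : repOneCocycles ρ →ₗ[k] LinearMap.ker ρ.norm :=
  ((LinearMap.proj g).comp (repOneCocycles ρ).subtype).codRestrict _
    fun f => norm_apply_eq_zero_of_mem_repOneCocycles f.2 g

theorem natCard_repH1_dvd_cardQuot [Fintype G] {g : G} (hg : ∀ x, x ∈ Subgroup.zpowers g) :
    Nat.card (repH1 ρ) ∣ (LinearMap.range (kerNormRepresentation ρ g - 1)).cardQuot := by
  set D := LinearMap.range (kerNormRepresentation ρ g - 1)
  have hle : D.comap (evalOneCocycle ρ g) ≤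
      (repOneCoboundaries ρ).comap (repOneCocycles ρ).subtype := by
    rintro f ⟨v, hv⟩
    exact mem_repOneCoboundaries_of_apply_generator f.2 hg (congrArg Subtype.val hv).symm
  calc Nat.card (repH1 ρ)
    _ ∣ (D.comap (evalOneCocycle ρ g)).cardQuot := AddSubgroup.index_dvd_of_le hle
    _ ∣ D.cardQuot :=
      (AddSubgroup.index_comap D.toAddSubgroup (evalOneCocycle ρ g).toAddMonoidHom).dvd.trans
        (AddSubgroup.relIndex_dvd_index_of_normal _ _)

end Cocycles

theorem le_pow_div_of_pow_dvd_prime_pow {p n k m : ℕ} (hp : p.Prime) (hk : 0 < k)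
    (h : n ^ k ∣ p ^ m) : n ≤ p ^ (m / k) := by
  obtain ⟨j, -, rfl⟩ := (Nat.dvd_prime_pow hp).mp ((dvd_pow_self n hk.ne').trans h)
  rw [← pow_mul, Nat.pow_dvd_pow_iff_le_right hp.one_lt] at h
  exact Nat.pow_le_pow_right hp.pos ((Nat.le_div_iff_mul_le hk).mpr h)

section PrimeOrder

variable {R : Type} [CommRing R] [IsDomain R] [IsPrincipalIdealRing R] {G : Type} [Group G]
  {M : Type} [AddCommGroup M] [Module R M] [Module.Free R M] [Module.Finite R M]
  (ρ : Representation R G M) {p : ℕ}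

theorem natCard_repH1_pow_dvd_cardQuot_pow_finrank [Fintype G] (hp : p.Prime)
    (hcard : Fintype.card G = p) (hpR : (p : R) ≠ 0) :
    Nat.card (repH1 ρ) ^ (p - 1) ∣
      (Ideal.span {(p : R)}).cardQuot ^ Module.finrank R (LinearMap.ker ρ.norm) := by
  have := Fact.mk hp
  have := isCyclic_of_prime_card (hcard ▸ Nat.card_eq_fintype_card)
  obtain ⟨g, hg⟩ := IsCyclic.exists_generator (α := G)
  have hinj : Function.Injective (p : Module.End R (LinearMap.ker ρ.norm)) := by
    intro v w hvw
    simp only [Module.End.natCast_apply, ← Nat.cast_smul_eq_nsmul R] at hvw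
    exact smul_right_injective _ hpR hvw
  have hT := aeval_cyclotomic_eq_zero_of_norm_eq_zero _ hp hcard hg (norm_kerNormRepresentation ρ)
  rw [← cardQuot_range_natCast_eq_pow_finrank]
  exact (pow_dvd_pow_of_dvd (natCard_repH1_dvd_cardQuot hg) _).trans
    (cardQuot_range_sub_one_pow_dvd hp.one_lt hT hinj)

theorem repH1_finite_elementaryAbelian_card_le_general {f : ℕ} (hp : p.Prime)
    (hcard : Nat.card G = p) (hpR : (p : R) ≠ 0)
    (hf : Nat.card (R ⧸ Ideal.span {(p : R)}) = p ^ f) :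
    Finite (repH1 ρ) ∧ (∀ x : repH1 ρ, p • x = 0) ∧
      Nat.card (repH1 ρ) ≤
        p ^ (f * (Module.finrank R M - Module.finrank R ρ.invariants) / (p - 1)) := by
  have : Finite G := Nat.finite_of_card_ne_zero (hcard ▸ hp.ne_zero)
  have := Fintype.ofFinite G
  rw [Nat.card_eq_fintype_card] at hcard
  have hp1 : 0 < p - 1 := Nat.sub_pos_of_lt hp.one_lt
  have hrank : Module.finrank R (LinearMap.ker ρ.norm) ≤
      Module.finrank R M - Module.finrank R ρ.invariants :=
    Nat.le_sub_of_add_le (finrank_ker_norm_add_finrank_invariants_le ρ (hcard ▸ hpR))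
  have hdvd : Nat.card (repH1 ρ) ^ (p - 1) ∣
      p ^ (f * (Module.finrank R M - Module.finrank R ρ.invariants)) := by
    rw [pow_mul, ← hf]
    exact (natCard_repH1_pow_dvd_cardQuot_pow_finrank ρ hp hcard hpR).trans (pow_dvd_pow _ hrank)
  refine ⟨Nat.finite_of_card_ne_zero fun h => ?_, hcard ▸ card_nsmul_repH1_eq_zero,
    le_pow_div_of_pow_dvd_prime_pow hp hp1 hdvd⟩
  rw [h, zero_pow hp1.ne', zero_dvd_iff] at hdvd
  exact pow_ne_zero _ hp.ne_zero hdvd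

end PrimeOrder

theorem natCard_padicInt_quotient_span_prime (p : ℕ) [Fact p.Prime] :
    Nat.card (ℤ_[p] ⧸ Ideal.span {(p : ℤ_[p])}) = p := by
  rw [← PadicInt.maximalIdeal_eq_span_p]
  exact (Nat.card_congr PadicInt.residueField.toEquiv).trans (Nat.card_zmod p)

/-- Let `p` be a prime and `G` a cyclic group of order `p`.  Let `M` be a `G`-module whose
underlying abelian group is a free `ℤ_p`-module of finite rank `r`, with `G` acting by
`ℤ_p`-linear automorphisms, and let `s` be the `ℤ_p`-rank of the fixed-point module `M^G`.
Then `H¹(G, M)` is a finite elementary abelian `p`-group whose dimension as an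
`𝔽_p`-vector space is at most `(r − s)/(p − 1)`. -/
theorem repH1_finite_elementaryAbelian_card_le
    (p : ℕ) [Fact p.Prime] (G : Type) [Group G]
    (hcyc : IsCyclic G) (hcard : Nat.card G = p)
    (M : Type) [AddCommGroup M] [Module ℤ_[p] M]
    [Module.Free ℤ_[p] M] [Module.Finite ℤ_[p] M]
    (ρ : Representation ℤ_[p] G M) (r s : ℕ)
    (hr : Module.finrank ℤ_[p] M = r)
    (hs : Module.finrank ℤ_[p] ↥(Representation.invariants ρ) = s) :
    Finite (repH1 ρ) ∧ (∀ x : repH1 ρ, p • x = 0) ∧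
      Nat.card (repH1 ρ) ≤ p ^ ((r - s) / (p - 1)) := by
  subst hr hs
  have hpR : (p : ℤ_[p]) ≠ 0 := Nat.cast_ne_zero.mpr (Fact.out : p.Prime).ne_zero
  have hf : Nat.card (ℤ_[p] ⧸ Ideal.span {(p : ℤ_[p])}) = p ^ 1 := by
    rw [pow_one, natCard_padicInt_quotient_span_prime]
  simpa using repH1_finite_elementaryAbelian_card_le_general ρ Fact.out hcard hpR hf
end
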